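/- Let n ≥ 2 and let φ : M_n(F) → M_n(F) be any map satisfying φ(XY + YX) = φ(X)φ(Y) + φ(Y)φ(X) for all X, Y ∈ M_n(F). Then exactly one of the following holds: (a) φ is constant, equal to P/2 for some idempotent matrix P ∈ M_n(F); or (b) there exist an invertible matrix T ∈ M_n(F) and an injective ring homomorphism ω : F → F such that either φ(X) = T·ω(X)·T⁻¹ for all X ∈ M_n(F), or φ(X) = T·(ω(X))ᵀ·T⁻¹ for all X ∈ M_n(F), where ω(X) denotes the matrix obtained by applying ω to each entry of X and (·)ᵀ denotes matrix transposition. -/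

import Mathlib

/-!
Put `ψ X = 2 φ(X/2)`; then `ψ` preserves the Jordan product `X ∘ Y = (XY + YX)/2`, so it maps
idempotents to idempotents.

*Splitting off the constant part.* `P = ψ 0` is an idempotent and `X ↦ ψ X - P` again preserves `∘`,
sends `0` to `0`, and takes values annihilated by `P`. So let `ψ 0 = 0`. The zero set of `ψ` absorbs
`∘`-products; if it contains one diagonal matrix unit it contains `1` (`JMul.zero_of_single`), and
`ψ = 0`. Otherwise the `ψ Eᵢᵢ` are `n` nonzero orthogonal idempotents, hence simultaneously
conjugate to the `Eᵢᵢ` (`exists_conj_single`), which also forces `P = 0`.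

*Homogeneity.* If `ψ Eᵢᵢ = Eᵢᵢ`, comparing Peirce components gives `ψ(cX) = ω(c) ψ(X)` with `ω`
multiplicative and `ω(1/2) = 1/2` (`JMul.exists_homogeneous`).

*Matrix units.* For `i ≠ j`, `ψ Eᵢⱼ` is a nonzero multiple of `Eᵢⱼ` or of `Eⱼᵢ`, and the same
alternative holds for all pairs (`JMul.dichotomy`). After a transposition and a diagonal conjugation,
`ψ` fixes every matrix unit.

*Entries.* If `ψ` fixes all matrix units, `Eⱼᵢ ∘ (Eⱼᵢ ∘ X) = (1/2) xᵢⱼ Eⱼᵢ` yields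
`(ψ X)ᵢⱼ = ω(xᵢⱼ)` off the diagonal, and the `(i, j)` entry of `Eᵢⱼ ∘ X`, which is `(xᵢᵢ + xⱼⱼ)/2`,
gives both the diagonal entries and the additivity of `ω` (`JMul.eq_map`).
-/

open Matrix

section JordanMultiplicative

variable {F : Type*} [Field F] {ι : Type*} [Fintype ι] [DecidableEq ι]

/-- The normalized Jordan product `(AB + BA)/2`. -/
def jordan (A B : Matrix ι ι F) : Matrix ι ι F := (2 : F)⁻¹ • (A * B + B * A)

/-- Maps preserving the normalized Jordan product; no additivity is assumed. -/
def JMul (ψ : Matrix ι ι F → Matrix ι ι F) : Prop := ∀ X Y, ψ (jordan X Y) = jordan (ψ X) (ψ Y)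

/-- The nonconstant maps of the classification: a field endomorphism applied entrywise, up to
conjugation and transposition. -/
def Std (ψ : Matrix ι ι F → Matrix ι ι F) : Prop :=
  ∃ T : Matrix ι ι F, IsUnit T ∧ ∃ ω : F →+* F,
    ((∀ X, ψ X = T * (X.map ω) * T⁻¹) ∨ (∀ X, ψ X = T * (X.map ω)ᵀ * T⁻¹))

theorem jordan_apply (A B : Matrix ι ι F) (k l : ι) :
    jordan A B k l = (2 : F)⁻¹ * (∑ m, A k m * B m l + ∑ m, B k m * A m l) := by
  simp [jordan, Matrix.mul_apply]

theorem jordan_single_apply (i j : ι) (c : F) (X : Matrix ι ι F) (k l : ι) :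
    jordan (single i j c) X k l =
      (2 : F)⁻¹ * ((if k = i then c * X j l else 0) + (if l = j then X k i * c else 0)) := by
  rw [jordan_apply]
  congr 2
  · by_cases h : k = i
    · subst h; simp [Matrix.single_apply]
    · simp [h, Ne.symm h]
  · by_cases h : l = j
    · subst h; simp [Matrix.single_apply]
    · simp [h, Ne.symm h]

theorem jordan_diagonal_apply (d : ι → F) (X : Matrix ι ι F) (k l : ι) :
    jordan (diagonal d) X k l = (2 : F)⁻¹ * ((d k + d l) * X k l) := by
  simp [jordan, Matrix.diagonal_mul, Matrix.mul_diagonal]; left; ring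

theorem jordan_self (h2 : (2 : F) ≠ 0) (A : Matrix ι ι F) : jordan A A = A * A := by
  rw [jordan, ← two_smul F (A * A), smul_smul, inv_mul_cancel₀ h2, one_smul]

theorem jordan_one (h2 : (2 : F) ≠ 0) (A : Matrix ι ι F) : jordan 1 A = A := by
  rw [jordan, one_mul, mul_one, ← two_smul F A, smul_smul, inv_mul_cancel₀ h2, one_smul]

theorem jordan_smul_one (h2 : (2 : F) ≠ 0) (c : F) (A : Matrix ι ι F) : jordan (c • 1) A = c • A := by
  rw [jordan, smul_mul_assoc, mul_smul_comm, ← smul_add, smul_comm, ← jordan, jordan_one h2]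

theorem jordan_comm (A B : Matrix ι ι F) : jordan A B = jordan B A := by
  rw [jordan, jordan, add_comm]

theorem jordan_zero (A : Matrix ι ι F) : jordan 0 A = 0 := by simp [jordan]

theorem jordan_sub (A B C : Matrix ι ι F) : jordan A (B - C) = jordan A B - jordan A C := by
  simp only [jordan, mul_sub, sub_mul, ← smul_sub]; congr 1; abel

/-- If an idempotent annihilates `X` for the Jordan product, it does so for the matrix product:
the Peirce `0`-space. -/
theorem mul_eq_zero_of_jordan (h2 : (2 : F) ≠ 0) {P X : Matrix ι ι F} (hP : P * P = P)
    (h : jordan P X = 0) : P * X = 0 := by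
  have h1 : P * X + X * P = 0 := by
    rw [jordan] at h
    exact (smul_eq_zero.1 h).resolve_left (inv_ne_zero h2)
  have h3 : P * X + P * X * P = 0 := by
    have := congrArg (P * ·) h1
    simpa [mul_add, ← mul_assoc, hP] using this
  have h4 : P * X * P + P * X * P = 0 := by
    have := congrArg (· * P) h3
    simpa [add_mul, mul_assoc, hP] using this
  have h5 : P * X * P = 0 := by
    rw [← two_smul F] at h4
    exact (smul_eq_zero.1 h4).resolve_left h2
  simpa [h5] using h3

/-! ### Zero sets and orthogonal idempotents -/

/-- The zero set of `ψ` absorbs Jordan products, so a zero at one diagonal matrix unit spreads to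
larger and larger diagonal idempotents, and finally to the identity. -/
theorem JMul.zero_of_single (h2 : (2 : F) ≠ 0) {ψ : Matrix ι ι F → Matrix ι ι F} (h : JMul ψ)
    {a : ι} (ha : ψ (single a a 1) = 0) (X : Matrix ι ι F) : ψ X = 0 := by
  have key : ∀ S : Finset ι, ψ (diagonal fun i => if i ∈ insert a S then 1 else 0) = 0 := by
    intro S
    induction S using Finset.induction_on with
    | empty =>
      rw [← ha]; congr 1; ext k l
      by_cases hk : k = l
      · subst hk; simp [Matrix.single_apply, eq_comm]
      · simp only [Matrix.diagonal_apply_ne _ hk, Matrix.single_apply]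
        grind
    | insert b S hb ih =>
      by_cases hba : b ∈ insert a S
      · rwa [Finset.insert_comm, Finset.insert_eq_of_mem hba]
      -- `U` is the transposition of `a` and `b`, cut down to the larger index set: its square is
      -- the larger idempotent, and since `U b b = 0` it is a Jordan multiple of the smaller one.
      set U : Matrix ι ι F := Matrix.of fun k l =>
        if k ∈ insert a (insert b S) ∧ l = Equiv.swap a b k then 1 else 0 with hU
      have hab : a ≠ b := by rintro rfl; simp at hba
      have h1 : jordan (diagonal fun i => if i ∈ insert a S then 1 else 0)
          (Matrix.of fun k l => if k = l then U k l else 2 * U k l) = U := by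
        ext k l
        rw [jordan_diagonal_apply]
        simp only [hU, Matrix.of_apply, Equiv.swap_apply_def]
        have h4 : (2 : F)⁻¹ * 2 = 1 := inv_mul_cancel₀ h2
        simp only [Finset.mem_insert] at hba ⊢
        split_ifs <;> grind
      have h3 : jordan U U = diagonal fun i => if i ∈ insert a (insert b S) then 1 else 0 := by
        rw [jordan_self h2]
        ext k l
        rw [Matrix.mul_apply, Finset.sum_eq_single (Equiv.swap a b k)]
        · by_cases hk : k = l
          · subst hk
            simp only [hU, Matrix.of_apply, Equiv.swap_apply_def, Matrix.diagonal_apply_eq]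
            simp only [Finset.mem_insert]
            grind
          · simp only [hU, Matrix.of_apply, Equiv.swap_apply_self, Ne.symm hk,
              Matrix.diagonal_apply_ne _ hk]
            simp
        · intro m _ hm
          simp [hU, hm]
        · simp
      rw [← h3, h, ← h1, h, ih, jordan_zero, jordan_zero]
  have h1 : ψ 1 = 0 := by
    have := key Finset.univ
    simpa using this
  rw [← jordan_one h2 X, h, h1, jordan_zero]

/-- A system of `n` nonzero orthogonal idempotents in `n × n` matrices is conjugate to the system of
diagonal matrix units. -/
theorem exists_conj_single (P : ι → Matrix ι ι F) (hP : ∀ i, P i * P i = P i)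
    (hPP : ∀ i j, i ≠ j → P i * P j = 0) (h0 : ∀ i, P i ≠ 0) :
    ∃ T : Matrix ι ι F, IsUnit T ∧ ∀ i, P i = T * single i i 1 * T⁻¹ := by
  have hv : ∀ i, ∃ v : ι → F, v ≠ 0 ∧ P i *ᵥ v = v := by
    intro i
    by_contra! hc
    apply h0 i
    refine Matrix.ext_of_mulVec_single fun j => ?_
    rw [Matrix.zero_mulVec]
    by_contra hne
    exact hc _ hne (by rw [Matrix.mulVec_mulVec, hP])
  choose v hv0 hv using hv
  have hvv : ∀ i j, P i *ᵥ v j = if i = j then v j else 0 := by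
    intro i j
    split_ifs with hij
    · rw [hij, hv]
    · rw [← hv j, Matrix.mulVec_mulVec, hPP i j hij, Matrix.zero_mulVec]
  have hli : LinearIndependent F v := by
    rw [Fintype.linearIndependent_iff]
    intro g hg i
    have h1 := congrArg (P i *ᵥ ·) hg
    simp only [Matrix.mulVec_sum, Matrix.mulVec_smul, hvv, Matrix.mulVec_zero] at h1
    simp at h1
    exact h1.resolve_right (hv0 i)
  let T : Matrix ι ι F := (Matrix.of v)ᵀ
  have hT : IsUnit T := Matrix.linearIndependent_cols_iff_isUnit.1 hli
  refine ⟨T, hT, fun i => ?_⟩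
  have h1 : P i * T = T * single i i 1 := by
    ext k l
    have h3 := congrFun (hvv i l) k
    have h4 : (P i * T) k l = (P i *ᵥ v l) k := rfl
    rw [h4, h3, Matrix.mul_apply]
    by_cases hil : i = l
    · subst hil
      simp [Matrix.single_apply, T]
    · simp [hil]
  rw [← h1, mul_assoc, Matrix.mul_nonsing_inv _ ((Matrix.isUnit_iff_isUnit_det _).1 hT), mul_one]

/-! ### Peirce components and homogeneity -/

theorem JMul.map_zero_of_single [Nontrivial ι] {ψ : Matrix ι ι F → Matrix ι ι F}
    (h : JMul ψ) (hE : ∀ i, ψ (single i i 1) = single i i 1) : ψ 0 = 0 := by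
  obtain ⟨i, j, hij⟩ := exists_pair_ne ι
  have h1 : jordan (single i i 1) (single j j (1 : F)) = 0 := by simp [jordan, hij, hij.symm]
  rw [← h1, h, hE, hE]

/-- A matrix supported at the positions `(i, j)` and `(j, i)` is sent to another such matrix. -/
theorem JMul.offdiag (h2 : (2 : F) ≠ 0) [Nontrivial ι] {ψ : Matrix ι ι F → Matrix ι ι F}
    (h : JMul ψ) (hE : ∀ i, ψ (single i i 1) = single i i 1) {i j : ι} (hij : i ≠ j) (a b : F) :
    ∃ a' b' : F, ψ (single i j a + single j i b) = single i j a' + single j i b' := by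
  set X : Matrix ι ι F := single i j a + single j i b with hX
  have h0 := h.map_zero_of_single hE
  have hk : ∀ k, k ≠ i → k ≠ j → jordan (single k k 1) (ψ X) = 0 := by
    intro k hi hj
    rw [← hE, ← h]
    convert h0
    simp [jordan, hX, mul_add, add_mul, hi, hj, hi.symm, hj.symm]
  have hs : jordan (single i i 1) (ψ X) = jordan (single j j 1) (ψ X) := by
    rw [← hE i, ← hE j, ← h, ← h]
    congr 1
    simp [jordan, hX, mul_add, add_mul, hij, hij.symm, add_comm]
  have hi2 : (2 : F)⁻¹ ≠ 0 := inv_ne_zero h2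
  refine ⟨ψ X i j, ψ X j i, ?_⟩
  ext k l
  have hs' := congrFun (congrFun hs k) l
  have hk' := fun (hi : k ≠ i) (hj : k ≠ j) => congrFun (congrFun (hk k hi hj) k) l
  have hl' := fun (hi : l ≠ i) (hj : l ≠ j) => congrFun (congrFun (hk l hi hj) k) l
  simp only [jordan_single_apply, Matrix.zero_apply, if_true, one_mul, mul_one] at hs' hk' hl'
  simp only [Matrix.add_apply, Matrix.single_apply]
  have h4 : (2 : F)⁻¹ * 2 = 1 := inv_mul_cancel₀ h2
  grind

/-- Scalars pass through `ψ`. The matrix `Eᵢⱼ + Eⱼᵢ` links the action of `ψ` on scalars at the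
diagonal positions `i` and `j`, and also determines `ω (1/2)`. -/
theorem JMul.exists_homogeneous (h2 : (2 : F) ≠ 0) [Nontrivial ι] {ψ : Matrix ι ι F → Matrix ι ι F}
    (h : JMul ψ) (hE : ∀ i, ψ (single i i 1) = single i i 1) :
    ∃ ω : F → F, ω 2⁻¹ = 2⁻¹ ∧ ω 1 = 1 ∧ ω 0 = 0 ∧ (∀ x y, ω (x * y) = ω x * ω y) ∧
      ∀ c X, ψ (c • X) = ω c • ψ X := by
  have h0 := h.map_zero_of_single hE
  have hi2 : (2 : F)⁻¹ ≠ 0 := inv_ne_zero h2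
  -- `ψ (c • 1)` is diagonal, since `Eₖₖ ∘ (Eₗₗ ∘ (c • 1)) = 0` reads off its `(k, l)` entry
  have hod : ∀ (c : F) k l, k ≠ l → ψ (c • 1) k l = 0 := by
    intro c k l hkl
    have h1 : jordan (single k k 1) (jordan (single l l 1) (ψ (c • 1))) = 0 := by
      rw [← hE k, ← hE l, ← h, ← h]
      convert h0
      rw [jordan_comm (single l l 1), jordan_smul_one h2]
      simp [jordan, hkl, hkl.symm]
    have h3 := congrFun (congrFun h1 k) l
    simpa [jordan_single_apply, hkl, hkl.symm, h2] using h3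
  have hS : ∀ i j, i ≠ j → ∀ c, ∃ a b a' b' : F,
      ψ (single i j 1 + single j i 1) = single i j a + single j i b ∧
      ψ (single i j c + single j i c) = single i j a' + single j i b' ∧
      ψ (c • 1) i i = 2⁻¹ * (a * b' + a' * b) ∧ ψ (c • 1) j j = 2⁻¹ * (a * b' + a' * b) := by
    intro i j hij c
    obtain ⟨a, b, hab⟩ := h.offdiag h2 hE hij 1 1
    obtain ⟨a', b', hab'⟩ := h.offdiag h2 hE hij c c
    refine ⟨a, b, a', b', hab, hab', ?_⟩
    have hJ : jordan (single i j 1 + single j i 1) (single i j c + single j i c)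
        = single i i c + single j j c := by
      simp only [jordan, mul_add, add_mul, single_mul_single_same,
        single_mul_single_of_ne _ _ _ _ hij, single_mul_single_of_ne _ _ _ _ hij.symm]
      ext k l
      simp only [Matrix.smul_apply, Matrix.add_apply, smul_eq_mul, Matrix.single_apply,
        Matrix.zero_apply]
      have h4 : (2 : F)⁻¹ * 2 = 1 := inv_mul_cancel₀ h2
      split_ifs <;> grind
    have hJ' : jordan (single i j a + single j i b) (single i j a' + single j i b')
        = single i i (2⁻¹ * (a * b' + a' * b)) + single j j (2⁻¹ * (a * b' + a' * b)) := by
      simp only [jordan, mul_add, add_mul, single_mul_single_same, single_mul_single_of_ne _ _ _ _ hij,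
        single_mul_single_of_ne _ _ _ _ hij.symm]
      ext k l
      simp only [Matrix.smul_apply, Matrix.add_apply, smul_eq_mul, Matrix.single_apply,
        Matrix.zero_apply]
      split_ifs <;> ring
    have hD : ∀ k, k = i ∨ k = j → jordan (single k k 1) (ψ (c • 1)) = jordan (single k k 1)
        (single i i (2⁻¹ * (a * b' + a' * b)) + single j j (2⁻¹ * (a * b' + a' * b))) := by
      intro k hk
      rw [← hJ', ← hab, ← hab', ← h, hJ, ← hE, ← h, ← h]
      congr 1
      rw [jordan_comm _ (c • 1), jordan_smul_one h2]
      rcases hk with rfl | rfl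
      · simp only [jordan, mul_add, add_mul, single_mul_single_same,
          single_mul_single_of_ne _ _ _ _ hij, single_mul_single_of_ne _ _ _ _ hij.symm]
        ext p q
        simp [Matrix.single_apply]
        grind
      · simp only [jordan, mul_add, add_mul, single_mul_single_same,
          single_mul_single_of_ne _ _ _ _ hij, single_mul_single_of_ne _ _ _ _ hij.symm]
        ext p q
        simp [Matrix.single_apply]
        grind
    have e1 := congrFun (congrFun (hD i (.inl rfl)) i) i
    have e2 := congrFun (congrFun (hD j (.inr rfl)) j) j
    simp only [jordan_single_apply, if_true, one_mul, mul_one, Matrix.add_apply,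
      Matrix.single_apply, hij, hij.symm, and_self, if_false, add_zero, zero_add, ← two_mul] at e1 e2
    exact ⟨mul_left_cancel₀ h2 (mul_left_cancel₀ hi2 e1),
      mul_left_cancel₀ h2 (mul_left_cancel₀ hi2 e2)⟩
  obtain ⟨i, j, hij⟩ := exists_pair_ne ι
  have hsc : ∀ c : F, ψ (c • 1) = ψ (c • 1) i i • 1 := by
    intro c
    ext k l
    by_cases hkl : k = l
    · subst hkl
      by_cases hki : k = i
      · simp [hki]
      · obtain ⟨a, b, a', b', -, -, h3, h4⟩ := hS k i hki c
        simp [h3, h4]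
    · simp [hod c k l hkl, hkl]
  have hom : ∀ (c : F) X, ψ (c • X) = ψ (c • 1) i i • ψ X := by
    intro c X
    rw [← jordan_smul_one h2, h, hsc, jordan_smul_one h2]
    simp
  have h1 : ψ ((1 : F) • 1) i i = 1 := by
    have h3 := hom 1 (single i i 1)
    rw [one_smul, hE] at h3
    simpa using (congrFun (congrFun h3 i) i).symm
  refine ⟨fun c => ψ (c • 1) i i, ?_, h1, by simp [h0], fun x y => ?_, hom⟩
  · obtain ⟨a, b, a', b', hab, hab', h3, -⟩ := hS i j hij 1
    have he : single i j a + single j i b = single i j a' + single j i b' := hab.symm.trans hab'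
    have ea := congrFun (congrFun he i) j
    have eb := congrFun (congrFun he j) i
    simp [hij, hij.symm] at ea eb
    subst ea eb
    have ha : a ≠ 0 := by
      rintro rfl
      rw [h1] at h3
      simp at h3
    have h4 := hom 2⁻¹ (single i j 1 + single j i 1)
    have h5 : (2 : F)⁻¹ • (single i j (1 : F) + single j i 1)
        = jordan (single i i 1) (single i j 1 + single j i 1) := by
      simp [jordan, mul_add, add_mul, hij, hij.symm]
    rw [h5, h, hE, hab] at h4
    have h6 := congrFun (congrFun h4 i) j
    rw [jordan_single_apply] at h6
    simp [hij.symm, ha] at h6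
    simpa using h6.symm
  · show ψ ((x * y) • 1) i i = _
    rw [mul_smul, hom]
    rfl

/-! ### Images of matrix units -/

/-- Either no off-diagonal matrix unit is transposed by `ψ`, or all of them are; in both cases the
scalar factors form a multiplicative cocycle. The two cases are exchanged by composing `ψ` with
transposition. -/
theorem JMul.dichotomy (h2 : (2 : F) ≠ 0) [Nontrivial ι] {ψ : Matrix ι ι F → Matrix ι ι F}
    (h : JMul ψ) (hE : ∀ i, ψ (single i i 1) = single i i 1) :
    ∃ a : ι → ι → F, (∀ i, a i i = 1) ∧ (∀ i j k, a i j * a j k = a i k) ∧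
      ((∀ i j, ψ (single i j 1) = single i j (a i j)) ∨
       (∀ i j, ψ (single i j 1) = single j i (a i j))) := by
  have h0 := h.map_zero_of_single hE
  obtain ⟨ω, hω2, hω1, hω0, hωm, hom⟩ := h.exists_homogeneous h2 hE
  have hi2 : (2 : F)⁻¹ ≠ 0 := inv_ne_zero h2
  have h3 : ∀ i j : ι, ∃ a b : F, i ≠ j → ψ (single i j 1) = single i j a + single j i b := by
    intro i j
    by_cases hij : i = j
    · exact ⟨0, 0, fun hh => absurd hij hh⟩
    · obtain ⟨a, b, hab⟩ := h.offdiag h2 hE hij 1 0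
      exact ⟨a, b, fun _ => by simpa using hab⟩
  choose a b hab using h3
  -- from `Eᵢⱼ ∘ Eᵢⱼ = 0`
  have hsq : ∀ i j, i ≠ j → a i j * b i j = 0 := by
    intro i j hij
    have h4 : jordan (ψ (single i j 1)) (ψ (single i j 1)) = 0 := by
      rw [← h, jordan_self h2]
      simp [hij.symm, h0]
    rw [jordan_self h2, hab i j hij] at h4
    have h5 := congrFun (congrFun h4 i) i
    simpa [mul_add, add_mul, hij, hij.symm, Matrix.single_apply] using h5
  -- from `Eᵢᵢ ∘ (Eᵢⱼ ∘ Eⱼᵢ) = (1/2) Eᵢᵢ`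
  have hinv : ∀ i j, i ≠ j → a i j * a j i + b i j * b j i = 1 := by
    intro i j hij
    have h4 : jordan (single i i 1) (jordan (ψ (single i j 1)) (ψ (single j i 1)))
        = (2 : F)⁻¹ • single i i 1 := by
      have h6 : ψ ((2 : F)⁻¹ • single i i 1) = (2 : F)⁻¹ • single i i 1 := by rw [hom, hω2, hE]
      rw [← h, ← hE, ← h, hE, ← h6]
      congr 1
      ext k l
      simp [jordan_single_apply]
      simp only [Matrix.single_apply]
      simp [hij, hij.symm]
      grind
    have h5 := congrFun (congrFun h4 i) i
    rw [hab i j hij, hab j i hij.symm, jordan_single_apply] at h5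
    simp [jordan, mul_add, add_mul, hij, hij.symm] at h5
    have h7 : (2 : F)⁻¹ * 2 = 1 := inv_mul_cancel₀ h2
    grind
  -- from `Eᵢⱼ ∘ Eⱼₖ = (1/2) Eᵢₖ`
  have htri : ∀ i j k, i ≠ j → j ≠ k → i ≠ k →
      a i j * a j k = a i k ∧ b i j * b j k = b i k := by
    intro i j k hij hjk hik
    have h4 : jordan (ψ (single i j 1)) (ψ (single j k 1)) = (2 : F)⁻¹ • ψ (single i k 1) := by
      rw [← h, ← hω2, ← hom]
      congr 1
      simp [jordan, hik.symm]
    rw [hab i j hij, hab j k hjk, hab i k hik] at h4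
    have h5 := congrFun (congrFun h4 i) k
    have h6 := congrFun (congrFun h4 k) i
    simp [jordan, mul_add, add_mul, hij, hij.symm, hik, hik.symm, hjk, hjk.symm, h2] at h5 h6
    constructor
    · exact h5
    · rw [mul_comm]; exact h6
  have hsym : ∀ i j, i ≠ j → a i j = 0 → a j i = 0 := by
    intro i j hij hz
    have e1 := hinv i j hij
    have e2 := hsq j i hij.symm
    grind
  have hrow : ∀ i j l, i ≠ j → i ≠ l → a i j = 0 → a i l = 0 := by
    intro i j l hij hil hz
    by_cases hjl : j = l
    · exact hjl ▸ hz
    · rw [← (htri i j l hij hjl hil).1, hz, zero_mul]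
  have hprop : ∀ i j k l, i ≠ j → k ≠ l → a i j = 0 → a k l = 0 := by
    intro i j k l hij hkl hz
    by_cases hik : i = k
    · subst hik; exact hrow _ _ _ hij hkl hz
    · exact hrow k i l (Ne.symm hik) hkl (hsym _ _ hik (hrow _ _ _ hij hik hz))
  -- the cocycle identity for pairwise distinct indices and the inverse relation extend to all
  -- indices once the diagonal values are set to `1`
  have hext : ∀ c : ι → ι → F, (∀ i j, i ≠ j → c i j * c j i = 1) →
      (∀ i j k, i ≠ j → j ≠ k → i ≠ k → c i j * c j k = c i k) →
      ∀ i j k, (if i = j then 1 else c i j) * (if j = k then 1 else c j k)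
        = if i = k then 1 else c i k := by
    intro c hc1 hc2 i j k
    have e1 := hc1 i j
    have e2 := hc2 i j k
    split_ifs <;> grind
  by_cases hz : ∃ i j, i ≠ j ∧ a i j = 0
  · obtain ⟨i₀, j₀, hij₀, hz⟩ := hz
    have ha : ∀ i j, i ≠ j → a i j = 0 := fun i j hij => hprop _ _ _ _ hij₀ hij hz
    refine ⟨fun i j => if i = j then 1 else b i j, by simp, hext b ?_ ?_, .inr ?_⟩
    · intro i j hij
      simpa [ha i j hij] using hinv i j hij
    · intro i j k h1 h3 h4
      exact (htri i j k h1 h3 h4).2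
    · intro i j
      by_cases hij : i = j
      · subst hij; simp [hE]
      · simp [hij, hab i j hij, ha i j hij]
  · push Not at hz
    have hb : ∀ i j, i ≠ j → b i j = 0 := fun i j hij =>
      (mul_eq_zero.1 (hsq i j hij)).resolve_left (hz i j hij)
    refine ⟨fun i j => if i = j then 1 else a i j, by simp, hext a ?_ ?_, .inl ?_⟩
    · intro i j hij
      simpa [hb i j hij] using hinv i j hij
    · intro i j k h1 h3 h4
      exact (htri i j k h1 h3 h4).1
    · intro i j
      by_cases hij : i = j
      · subst hij; simp [hE]
      · simp [hij, hab i j hij, hb i j hij]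

/-! ### Maps fixing all matrix units -/

theorem JMul.eq_map (h2 : (2 : F) ≠ 0) [Nontrivial ι] {ψ : Matrix ι ι F → Matrix ι ι F}
    (h : JMul ψ) (hE : ∀ i j, ψ (single i j 1) = single i j 1) :
    ∃ ω : F →+* F, ∀ X, ψ X = X.map ω := by
  obtain ⟨ω, hω2, hω1, hω0, hωm, hom⟩ := h.exists_homogeneous h2 fun i => hE i i
  have hi2 : (2 : F)⁻¹ ≠ 0 := inv_ne_zero h2
  have h22 : (2 : F)⁻¹ * 2 = 1 := inv_mul_cancel₀ h2
  have hoff : ∀ X i j, i ≠ j → ψ X i j = ω (X i j) := by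
    intro X i j hij
    have hJ : ∀ Y : Matrix ι ι F, jordan (single j i 1) (jordan (single j i 1) Y)
        = ((2 : F)⁻¹ * Y i j) • single j i 1 := by
      intro Y
      ext k l
      rw [jordan_single_apply, jordan_single_apply, jordan_single_apply]
      simp [Matrix.single_apply, hij, hij.symm]
      grind
    have h1 := hJ (ψ X)
    rw [← hE, ← h, ← h, hJ X, hom, hωm, hω2, hE] at h1
    have h3 := congrFun (congrFun h1 j) i
    simpa [h2] using h3.symm
  have hsum : ∀ X i j, i ≠ j → ω (X i i + X j j) = ψ X i i + ψ X j j := by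
    intro X i j hij
    have h1 := hoff (jordan (single i j 1) X) i j hij
    rw [h, hE, jordan_single_apply, jordan_single_apply] at h1
    simp [hωm, hω2, h2] at h1
    rw [add_comm, ← h1, add_comm]
  have hdiag : ∀ X i, ψ X i i = ω (X i i) := by
    intro X i
    obtain ⟨j, hji⟩ := exists_ne i
    -- `Eᵢᵢ ∘ X` has the `(i, i)` entry of `X` and a zero at `(j, j)`
    have h1 := hsum (jordan (single i i 1) X) i j hji.symm
    rw [h, hE] at h1
    simp only [jordan_single_apply, hji, if_true, if_false, one_mul, mul_one, add_zero, mul_zero,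
      ← two_mul] at h1
    rw [← mul_assoc, ← mul_assoc, h22, one_mul, one_mul] at h1
    exact h1.symm
  refine ⟨⟨⟨⟨ω, hω1⟩, hωm⟩, hω0, ?_⟩, ?_⟩
  · intro x y
    obtain ⟨i, j, hij⟩ := exists_pair_ne ι
    have h1 := hsum (single i i x + single j j y) i j hij
    rw [hdiag, hdiag] at h1
    simpa [hij, hij.symm] using h1
  · intro X
    ext k l
    by_cases hkl : k = l
    · subst hkl; exact hdiag X k
    · exact hoff X k l hkl

/-! ### Conjugation and transposition -/

theorem JMul.conj {ψ : Matrix ι ι F → Matrix ι ι F} (h : JMul ψ) {T : Matrix ι ι F}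
    (hT : IsUnit T) : JMul fun X => T⁻¹ * ψ X * T := by
  have h1 : T * T⁻¹ = 1 := Matrix.mul_nonsing_inv _ ((Matrix.isUnit_iff_isUnit_det _).1 hT)
  have h3 : ∀ A B : Matrix ι ι F, T⁻¹ * A * T * (T⁻¹ * B * T) = T⁻¹ * (A * B) * T := by
    intro A B
    calc _ = T⁻¹ * A * (T * T⁻¹) * B * T := by simp only [mul_assoc]
      _ = _ := by rw [h1, mul_one]; simp only [mul_assoc]
  intro X Y
  show T⁻¹ * ψ (jordan X Y) * T = _
  rw [h, jordan, jordan, h3, h3, ← add_mul, ← mul_add, mul_smul_comm, smul_mul_assoc]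

theorem Std.of_conj {ψ : Matrix ι ι F → Matrix ι ι F} {T : Matrix ι ι F}
    (hT : IsUnit T) (h : Std fun X => T⁻¹ * ψ X * T) : Std ψ := by
  have h1 : T * T⁻¹ = 1 := Matrix.mul_nonsing_inv _ ((Matrix.isUnit_iff_isUnit_det _).1 hT)
  have h3 : ∀ A, A = T * (T⁻¹ * A * T) * T⁻¹ := by
    intro A
    calc A = (T * T⁻¹) * A * (T * T⁻¹) := by rw [h1, one_mul, mul_one]
      _ = _ := by simp only [mul_assoc]
  obtain ⟨S, hS, ω, h⟩ := h
  refine ⟨T * S, hT.mul hS, ω, ?_⟩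
  rw [Matrix.mul_inv_rev]
  refine h.imp (fun h X => ?_) (fun h X => ?_)
  · rw [h3 (ψ X)]
    have h4 : T⁻¹ * ψ X * T = _ := h X
    rw [h4]; simp only [mul_assoc]
  · rw [h3 (ψ X)]
    have h4 : T⁻¹ * ψ X * T = _ := h X
    rw [h4]; simp only [mul_assoc]

theorem JMul.transpose {ψ : Matrix ι ι F → Matrix ι ι F} (h : JMul ψ) : JMul fun X => (ψ X)ᵀ := by
  intro X Y
  show (ψ (jordan X Y))ᵀ = _
  rw [h, jordan, jordan, Matrix.transpose_smul, Matrix.transpose_add, Matrix.transpose_mul,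
    Matrix.transpose_mul, add_comm]

theorem Std.of_transpose {ψ : Matrix ι ι F → Matrix ι ι F} (h : Std fun X => (ψ X)ᵀ) :
    Std ψ := by
  obtain ⟨S, hS, ω, h⟩ := h
  have hSt : IsUnit Sᵀ := by
    rw [Matrix.isUnit_iff_isUnit_det, Matrix.det_transpose, ← Matrix.isUnit_iff_isUnit_det]
    exact hS
  have hSi : IsUnit (Sᵀ)⁻¹ := by
    rw [Matrix.isUnit_nonsing_inv_iff]; exact hSt
  have hinv : ((Sᵀ)⁻¹)⁻¹ = Sᵀ :=
    Matrix.nonsing_inv_nonsing_inv _ ((Matrix.isUnit_iff_isUnit_det _).1 hSt)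
  refine ⟨(Sᵀ)⁻¹, hSi, ω, ?_⟩
  rw [hinv]
  refine h.symm.imp (fun h X => ?_) (fun h X => ?_)
  · have h4 : (ψ X)ᵀ = _ := h X
    rw [← Matrix.transpose_transpose (ψ X), h4]
    simp [Matrix.transpose_mul, Matrix.transpose_nonsing_inv, mul_assoc]
  · have h4 : (ψ X)ᵀ = _ := h X
    rw [← Matrix.transpose_transpose (ψ X), h4]
    simp [Matrix.transpose_mul, Matrix.transpose_nonsing_inv, mul_assoc]

/-! ### The classification -/

/-- The factors `a i j` form a coboundary `t i / t j`, so a diagonal conjugation removes them. -/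
theorem JMul.std_of_cocycle (h2 : (2 : F) ≠ 0) [Nontrivial ι] {ψ : Matrix ι ι F → Matrix ι ι F}
    (h : JMul ψ) (a : ι → ι → F) (ha : ∀ i, a i i = 1) (haa : ∀ i j k, a i j * a j k = a i k)
    (hE : ∀ i j, ψ (single i j 1) = single i j (a i j)) : Std ψ := by
  obtain ⟨o, -, -⟩ := exists_pair_ne ι
  have hinv : ∀ i j, a i j * a j i = 1 := fun i j => by rw [haa, ha]
  have hD : IsUnit (diagonal fun i => a i o) := by
    rw [Matrix.isUnit_diagonal, Pi.isUnit_iff]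
    exact fun i => IsUnit.of_mul_eq_one _ (hinv i o)
  have hDi : (diagonal fun i => a i o)⁻¹ = diagonal fun i => a o i := by
    apply Matrix.inv_eq_right_inv
    rw [Matrix.diagonal_mul_diagonal]
    simp [hinv]
  apply Std.of_conj hD
  obtain ⟨ω, hω⟩ := (h.conj hD).eq_map h2 (by
    intro i j
    rw [hE, hDi]
    ext k l
    simp only [Matrix.mul_diagonal, Matrix.diagonal_mul, Matrix.single_apply]
    split_ifs with hkl
    · rw [← hkl.1, ← hkl.2, haa, haa, ha]
    · simp)
  exact ⟨1, isUnit_one, ω, .inl fun X => (hω X).trans (by simp)⟩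

theorem JMul.std_of_single (h2 : (2 : F) ≠ 0) [Nontrivial ι] {ψ : Matrix ι ι F → Matrix ι ι F}
    (h : JMul ψ) (hE : ∀ i, ψ (single i i 1) = single i i 1) : Std ψ := by
  obtain ⟨a, ha, haa, hc | hc⟩ := h.dichotomy h2 hE
  · exact h.std_of_cocycle h2 a ha haa hc
  · exact Std.of_transpose (h.transpose.std_of_cocycle h2 a ha haa fun i j => by
      rw [hc, Matrix.transpose_single])

theorem JMul.const_or_std (h2 : (2 : F) ≠ 0) [Nontrivial ι] {ψ : Matrix ι ι F → Matrix ι ι F}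
    (h : JMul ψ) : (∃ P : Matrix ι ι F, P * P = P ∧ ∀ X, ψ X = P) ∨ Std ψ := by
  have hP : ψ 0 * ψ 0 = ψ 0 := by rw [← jordan_self h2, ← h, jordan_zero]
  have hPX : ∀ X, jordan (ψ 0) (ψ X) = ψ 0 := fun X => by rw [← h, jordan_zero]
  have hPX' : ∀ X, jordan (ψ 0) (ψ X - ψ 0) = 0 := fun X => by rw [jordan_sub, hPX, hPX, sub_self]
  have h' : JMul fun X => ψ X - ψ 0 := by
    intro X Y
    show ψ (jordan X Y) - ψ 0 = jordan (ψ X - ψ 0) (ψ Y - ψ 0)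
    rw [jordan_sub, jordan_comm _ (ψ 0), hPX', sub_zero, jordan_comm (ψ X - ψ 0), jordan_sub,
      jordan_comm _ (ψ 0), hPX, h, jordan_comm]
  by_cases hz : ∃ i, ψ (single i i 1) - ψ 0 = 0
  · obtain ⟨i, hz⟩ := hz
    exact .inl ⟨ψ 0, hP, fun X => sub_eq_zero.1 (h'.zero_of_single h2 hz X)⟩
  · right
    push Not at hz
    have hid : ∀ i, (ψ (single i i 1) - ψ 0) * (ψ (single i i 1) - ψ 0)
        = ψ (single i i 1) - ψ 0 := by
      intro i
      have h1 := h' (single i i 1) (single i i 1)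
      simp only [jordan_self h2] at h1
      rw [← h1]; simp
    obtain ⟨T, hT, hTE⟩ := exists_conj_single (fun i => ψ (single i i 1) - ψ 0) hid (by
      intro i j hij
      apply mul_eq_zero_of_jordan h2 (hid i)
      have h1 := h' (single i i 1) (single j j 1)
      rw [← h1]
      simp [jordan, hij, hij.symm]) hz
    have hdet := (Matrix.isUnit_iff_isUnit_det _).1 hT
    have hsum : ∑ i, (ψ (single i i 1) - ψ 0) = 1 := by
      simp only [hTE]
      rw [← Finset.sum_mul, ← Finset.mul_sum]
      have h1 : ∑ i : ι, single i i (1 : F) = 1 := by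
        ext k l
        rw [Matrix.sum_apply]
        by_cases hkl : k = l
        · subst hkl; simp [Matrix.single_apply]
        · simp only [Matrix.one_apply_ne hkl, Matrix.single_apply]
          apply Finset.sum_eq_zero
          grind
      rw [h1, mul_one, Matrix.mul_nonsing_inv _ hdet]
    have h0 : ψ 0 = 0 := by
      rw [← mul_one (ψ 0), ← hsum, Finset.mul_sum]
      exact Finset.sum_eq_zero fun i _ => mul_eq_zero_of_jordan h2 hP (hPX' _)
    simp only [h0, sub_zero] at hTE
    refine Std.of_conj hT ((h.conj hT).std_of_single h2 fun i => ?_)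
    have h1 : T⁻¹ * T = 1 := Matrix.nonsing_inv_mul _ hdet
    rw [hTE]
    calc _ = (T⁻¹ * T) * single i i 1 * (T⁻¹ * T) := by simp only [mul_assoc]
      _ = _ := by rw [h1, one_mul, mul_one]

end JordanMultiplicative

theorem stmt_1 {F : Type*} [Field F] (h2 : (2 : F) ≠ 0) (n : ℕ) (hn : 2 ≤ n)
    (φ : Matrix (Fin n) (Fin n) F → Matrix (Fin n) (Fin n) F)
    (hφ : ∀ X Y : Matrix (Fin n) (Fin n) F,
      φ (X * Y + Y * X) = φ X * φ Y + φ Y * φ X) :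
    Xor'
      (∃ P : Matrix (Fin n) (Fin n) F, P * P = P ∧ ∀ X, φ X = (2 : F)⁻¹ • P)
      (∃ T : Matrix (Fin n) (Fin n) F, IsUnit T ∧ ∃ ω : F →+* F, Function.Injective ω ∧
        ((∀ X, φ X = T * (X.map ω) * T⁻¹) ∨ (∀ X, φ X = T * (X.map ω)ᵀ * T⁻¹))) := by
  have : Nontrivial (Fin n) := Fin.nontrivial_iff_two_le.2 hn
  have hi2 : (2 : F)⁻¹ * 2 = 1 := inv_mul_cancel₀ h2
  have hJ : JMul fun X => (2 : F) • φ ((2 : F)⁻¹ • X) := by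
    intro X Y
    show (2 : F) • φ ((2 : F)⁻¹ • jordan X Y) = jordan ((2 : F) • φ ((2 : F)⁻¹ • X)) ((2 : F) • φ ((2 : F)⁻¹ • Y))
    have h1 : (2 : F)⁻¹ • jordan X Y
        = ((2 : F)⁻¹ • X) * ((2 : F)⁻¹ • Y) + ((2 : F)⁻¹ • Y) * ((2 : F)⁻¹ • X) := by
      simp only [jordan, smul_mul_assoc, mul_smul_comm, smul_add]
    rw [h1, hφ]
    simp only [jordan, smul_mul_assoc, mul_smul_comm, ← smul_add, smul_smul]
    rw [← mul_assoc, hi2, one_mul]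
  have hφψ : ∀ X, φ X = (2 : F)⁻¹ • ((2 : F) • φ ((2 : F)⁻¹ • ((2 : F) • X))) := by
    intro X
    rw [smul_smul, smul_smul, hi2, one_smul, one_smul]
  have hexcl : ¬ ((∃ P : Matrix (Fin n) (Fin n) F, P * P = P ∧ ∀ X, φ X = (2 : F)⁻¹ • P) ∧
      (∃ T : Matrix (Fin n) (Fin n) F, IsUnit T ∧ ∃ ω : F →+* F, Function.Injective ω ∧
        ((∀ X, φ X = T * (X.map ω) * T⁻¹) ∨ (∀ X, φ X = T * (X.map ω)ᵀ * T⁻¹)))) := by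
    rintro ⟨⟨P, -, hP⟩, T, hT, ω, -, h⟩
    have hTT : T * T⁻¹ = 1 := Matrix.mul_nonsing_inv _ ((Matrix.isUnit_iff_isUnit_det _).1 hT)
    have e : φ 0 = φ 1 := by rw [hP, hP]
    have e0 : φ 0 = 0 := by
      rcases h with h | h <;> simp [h]
    have e1 : φ 1 = 1 := by
      rcases h with h | h <;> simp [h, hTT]
    rw [e0, e1] at e
    exact zero_ne_one e
  have hor : (∃ P : Matrix (Fin n) (Fin n) F, P * P = P ∧ ∀ X, φ X = (2 : F)⁻¹ • P) ∨
      (∃ T : Matrix (Fin n) (Fin n) F, IsUnit T ∧ ∃ ω : F →+* F, Function.Injective ω ∧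
        ((∀ X, φ X = T * (X.map ω) * T⁻¹) ∨ (∀ X, φ X = T * (X.map ω)ᵀ * T⁻¹))) := by
    refine (hJ.const_or_std h2).imp ?_ ?_
    · rintro ⟨P, hP, h⟩
      exact ⟨P, hP, fun X => by rw [hφψ X]; exact congrArg _ (h _)⟩
    · rintro ⟨T, hT, ω, h⟩
      have hm : ∀ X : Matrix (Fin n) (Fin n) F, ((2 : F) • X).map ω = (2 : F) • X.map ω := by
        intro X; ext k l; simp [map_ofNat]
      refine ⟨T, hT, ω, ω.injective, h.imp (fun h X => ?_) (fun h X => ?_)⟩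
      · rw [hφψ X]
        refine (congrArg _ (h _)).trans ?_
        rw [hm, mul_smul_comm, smul_mul_assoc, smul_smul, hi2, one_smul]
      · rw [hφψ X]
        refine (congrArg _ (h _)).trans ?_
        rw [hm, Matrix.transpose_smul, mul_smul_comm, smul_mul_assoc, smul_smul, hi2, one_smul]
  rcases hor with h | h
  · exact .inl ⟨h, fun h' => hexcl ⟨h, h'⟩⟩
  · exact .inr ⟨h, fun h' => hexcl ⟨h', h⟩⟩
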